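/- Let d ≥ 1, let α = (α_1,…,α_d) be a multi-index with α_j > −1/2 for each j, let β > 0, and let k and l be integers with k > β and l > β. Then for every bounded measurable function f on (0,∞)^d the following two conditions are equivalent: (a) there exists A ≥ 0 such that sup_x |∂^k_t P_t^α f(x)| ≤ A t^{−k+β} for all t > 0; (b) there exists A' ≥ 0 such that sup_x |∂^l_t P_t^α f(x)| ≤ A' t^{−l+β} for all t > 0. Moreover there is a constant C > 0, depending only on α, d, β, k, l, such that if (a) holds with constant A then (b) holds with constant A' = C·A. -/

import Mathlib

open MeasureTheory Real Set

noncomputable def besselI (ν z : ℝ) : ℝ :=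
  ∑' m : ℕ, (z / 2) ^ (2 * (m : ℝ) + ν) / (Nat.factorial m * Real.Gamma ((m : ℝ) + ν + 1))

/-- The positive orthant `(0,∞)^d`. -/
def posOrthant (d : ℕ) : Set (Fin d → ℝ) := Set.univ.pi fun _ => Set.Ioi 0

/-- The Poisson–Laguerre kernel `p_t^α(x,y)`. -/
noncomputable def plKernel (d : ℕ) (α : Fin d → ℝ) (t : ℝ) (x y : Fin d → ℝ) : ℝ :=
  (1 / (2 * Real.sqrt π)) *
    ∫ r in Set.Ioo (0 : ℝ) 1,
      (t * Real.exp (t ^ 2 / (4 * Real.log r)) /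
          ((1 - r) ^ d * (-Real.log r) ^ ((3 : ℝ) / 2))) *
        (∏ j, (y j / x j) ^ (α j / 2) *
            Real.exp (-((r * x j + y j) / (1 - r)) - α j * Real.log r / 2) *
            besselI (α j) (2 * Real.sqrt (r * x j * y j) / (1 - r))) / r

/-- The Poisson–Laguerre semigroup `P_t^α f`, with the convention `P_0^α f = f`. -/
noncomputable def plP (d : ℕ) (α : Fin d → ℝ) (t : ℝ)
    (f : (Fin d → ℝ) → ℝ) (x : Fin d → ℝ) : ℝ :=
  if t = 0 then f x else ∫ y in posOrthant d, plKernel d α t x y * f y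

/-!
Substituting `r = exp (-s)` in the kernel exhibits `P_t` as the average, over the one-sided stable
law of index `1/2` in `s`, of the Laguerre heat semigroup. The heat transition densities are
products of noncentral gamma densities (Poisson mixtures of gamma densities), and their Laplace
transforms are explicit. A finite measure on the half-line is determined by its Laplace transform at
the natural numbers, because `exp (-x)` generates a point-separating algebra; this yields both the
Chapman–Kolmogorov equation for the heat densities and the convolution rule for the stable laws.

The `n`-th time derivative of the stable density has `L¹` norm `O(t⁻ⁿ)`, so that
`∂^(m+k) P_t = (∂^m P_{t/2}) (∂^k P_{t/2})` raises the order in the Lipschitz condition. Conversely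
`∂^l P_t f` tends to `0` as `t → ∞` for `l ≥ 1`, so integrating `∂^(l+1) P_u f` over `u > t` lowers
the order as long as `l > β`.
-/

open Filter Topology ProbabilityTheory
open scoped ENNReal BoundedContinuousFunction

section Integrals

variable {X Y : Type*} [MeasurableSpace X] [MeasurableSpace Y] {μ : Measure X} {ν : Measure Y}

lemma abs_integral_mul_le {w g : X → ℝ} {M : ℝ} (hw : Integrable w μ)
    (hg : ∀ᵐ x ∂μ, |g x| ≤ M) : |∫ x, w x * g x ∂μ| ≤ (∫ x, |w x| ∂μ) * M := by
  rw [← Real.norm_eq_abs]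
  refine (norm_integral_le_of_norm_le (hw.abs.mul_const M) (hg.mono fun x hx => ?_)).trans_eq
    (integral_mul_const M _)
  rw [norm_mul]
  exact mul_le_mul_of_nonneg_left hx (norm_nonneg _)

lemma integral_withDensity_ofReal {p : X → ℝ} (hp : AEMeasurable p μ) (hp0 : 0 ≤ᵐ[μ] p)
    (g : X → ℝ) :
    ∫ x, g x ∂μ.withDensity (fun x => ENNReal.ofReal (p x)) = ∫ x, p x * g x ∂μ := by
  rw [integral_withDensity_eq_integral_toReal_smul₀ hp.ennreal_ofReal (by simp)]
  refine integral_congr_ae (hp0.mono fun x hx => ?_)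
  simp only [smul_eq_mul, ENNReal.toReal_ofReal hx]

lemma integral_mul_integral_mul_comm [SFinite μ] [SFinite ν] {v : X → ℝ} {w : Y → ℝ}
    {F : X → Y → ℝ} {M : ℝ} (hv : Integrable v μ) (hw : Integrable w ν)
    (hF : Measurable (Function.uncurry F)) (hM : ∀ᵐ x ∂μ, ∀ᵐ y ∂ν, |F x y| ≤ M) :
    ∫ x, v x * ∫ y, w y * F x y ∂ν ∂μ = ∫ y, w y * ∫ x, v x * F x y ∂μ ∂ν := by
  have hbound : ∀ᵐ q ∂μ.prod ν, ‖Function.uncurry F q‖ ≤ M :=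
    (Measure.ae_prod_iff_ae_ae (measurableSet_le hF.norm measurable_const)).2 hM
  have hint : Integrable (fun q : X × Y => v q.1 * w q.2 * F q.1 q.2) (μ.prod ν) :=
    (hv.mul_prod hw).mul_bdd hF.aestronglyMeasurable hbound
  calc ∫ x, v x * ∫ y, w y * F x y ∂ν ∂μ
      = ∫ x, ∫ y, v x * w y * F x y ∂ν ∂μ := by simp only [← integral_const_mul, mul_assoc]
    _ = ∫ y, ∫ x, v x * w y * F x y ∂μ ∂ν := integral_integral_swap hint
    _ = ∫ y, w y * ∫ x, v x * F x y ∂μ ∂ν := by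
        simp only [← integral_const_mul, mul_assoc, mul_left_comm]

lemma integrable_mul_of_integral_eq_one [SFinite ν] {v : X → ℝ} {k : X → Y → ℝ}
    (hv : Integrable v μ) (hk : Measurable (Function.uncurry k)) (hk0 : ∀ᵐ x ∂μ, ∀ y, 0 ≤ k x y)
    (hk1 : ∀ᵐ x ∂μ, ∫ y, k x y ∂ν = 1) :
    Integrable (fun q : X × Y => v q.1 * k q.1 q.2) (μ.prod ν) := by
  have hmeas := hv.aestronglyMeasurable.comp_fst (ν := ν) |>.mul hk.aestronglyMeasurable
  refine (integrable_prod_iff hmeas).2 ⟨hk1.mono fun x hx => ?_, hv.norm.congr ?_⟩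
  · exact (Integrable.of_integral_ne_zero (by simp [hx])).const_mul (v x)
  · filter_upwards [hk0, hk1] with x hx0 hx1
    simp only [Pi.mul_apply, Function.uncurry_apply_pair, norm_mul, integral_const_mul,
      Real.norm_of_nonneg (hx0 _), hx1, mul_one]

lemma integral_mul_integral_kernel_mul [SFinite μ] [SFinite ν] {v : X → ℝ} {k : X → Y → ℝ}
    {f : Y → ℝ} {M : ℝ} (hv : Integrable v μ) (hk : Measurable (Function.uncurry k))
    (hk0 : ∀ᵐ x ∂μ, ∀ y, 0 ≤ k x y) (hk1 : ∀ᵐ x ∂μ, ∫ y, k x y ∂ν = 1)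
    (hf : Measurable f) (hM : ∀ᵐ y ∂ν, |f y| ≤ M) :
    ∫ x, v x * ∫ y, k x y * f y ∂ν ∂μ = ∫ y, (∫ x, v x * k x y ∂μ) * f y ∂ν := by
  have hint : Integrable (fun q : X × Y => v q.1 * k q.1 q.2 * f q.2) (μ.prod ν) :=
    (integrable_mul_of_integral_eq_one hv hk hk0 hk1).mul_bdd
      (hf.comp measurable_snd).aestronglyMeasurable (Measure.quasiMeasurePreserving_snd.ae hM)
  calc ∫ x, v x * ∫ y, k x y * f y ∂ν ∂μ
      = ∫ x, ∫ y, v x * k x y * f y ∂ν ∂μ := by simp only [← integral_const_mul, mul_assoc]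
    _ = ∫ y, ∫ x, v x * k x y * f y ∂μ ∂ν := integral_integral_swap hint
    _ = ∫ y, (∫ x, v x * k x y ∂μ) * f y ∂ν := by simp only [integral_mul_const]

end Integrals

lemma abs_le_of_abs_deriv_le_rpow {G G' : ℝ → ℝ} {A γ : ℝ} (hγ : γ < 0)
    (hG : ∀ t > 0, HasDerivAt G (G' t) t) (hA : ∀ t > 0, |G' t| ≤ A * t ^ (γ - 1))
    (hlim : Tendsto G atTop (𝓝 0)) {t : ℝ} (ht : 0 < t) : |G t| ≤ A / -γ * t ^ γ := by
  have hmaj : IntegrableOn (fun u : ℝ => A * u ^ (γ - 1)) (Ioi t) :=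
    (integrableOn_Ioi_rpow_of_lt (by linarith) ht).const_mul A
  have hbound : ∀ᵐ u ∂volume.restrict (Ioi t), ‖G' u‖ ≤ A * u ^ (γ - 1) :=
    (ae_restrict_mem measurableSet_Ioi).mono fun u hu => hA u (ht.trans hu)
  have hmeas : AEStronglyMeasurable G' (volume.restrict (Ioi t)) :=
    (measurable_deriv G).aestronglyMeasurable.congr <|
      (ae_restrict_mem measurableSet_Ioi).mono fun u hu => (hG u (ht.trans hu)).deriv
  have hint : ∫ u in Ioi t, G' u = -G t := by
    simpa using integral_Ioi_of_hasDerivAt_of_tendsto' (fun u hu => hG u (ht.trans_le hu))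
      (hmaj.mono' hmeas hbound) hlim
  calc |G t| = ‖∫ u in Ioi t, G' u‖ := by rw [hint, norm_neg, Real.norm_eq_abs]
    _ ≤ ∫ u in Ioi t, A * u ^ (γ - 1) := norm_integral_le_of_norm_le hmaj hbound
    _ = A / -γ * t ^ γ := by
        rw [integral_const_mul, integral_Ioi_rpow_of_lt (by linarith) ht, sub_add_cancel]
        ring

theorem measure_eq_of_forall_integral_pow_eq {X : Type*} [TopologicalSpace X] [PolishSpace X]
    [MeasurableSpace X] [BorelSpace X] {μ ν : Measure X} [IsFiniteMeasure μ] [IsFiniteMeasure ν]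
    (g : X →ᵇ ℝ) (hg : Function.Injective g)
    (h : ∀ n : ℕ, ∫ x, g x ^ n ∂μ = ∫ x, g x ^ n ∂ν) : μ = ν := by
  let A : StarSubalgebra ℝ (X →ᵇ ℝ) :=
    { Algebra.adjoin ℝ {g} with
      star_mem' := fun {a} ha => by rwa [show star a = a from by ext; simp] }
  have hgA : g ∈ A := Algebra.subset_adjoin rfl
  refine ext_of_forall_mem_subalgebra_integral_eq_of_polish (A := A)
    (fun x y hxy => ⟨g, ⟨_, ⟨g, hgA, rfl⟩, rfl⟩, hg.ne hxy⟩) fun f hf => ?_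
  obtain ⟨p, rfl⟩ : ∃ p : Polynomial ℝ, Polynomial.aeval g p = f := by
    have hf' : f ∈ Algebra.adjoin ℝ {g} := hf
    rwa [Algebra.adjoin_singleton_eq_range_aeval] at hf'
  clear hf
  induction p using Polynomial.induction_on' with
  | add p q hp hq =>
    simp only [map_add, BoundedContinuousFunction.coe_add, Pi.add_apply]
    rw [integral_add (BoundedContinuousFunction.integrable _ _)
      (BoundedContinuousFunction.integrable _ _), integral_add
      (BoundedContinuousFunction.integrable _ _) (BoundedContinuousFunction.integrable _ _), hp, hq]
  | monomial n a =>
    have heval (x : X) : Polynomial.aeval g (Polynomial.monomial n a) x = a * g x ^ n := by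
      simp [Polynomial.aeval_monomial]
    simp only [heval, integral_const_mul, h]

/-- A bounded continuous injective function on `ℝ` that agrees with `exp (-x)` for `0 ≤ x`. -/
noncomputable def expNegExtension : ℝ →ᵇ ℝ :=
  BoundedContinuousFunction.ofNormedAddCommGroup
    (fun x : ℝ => Real.exp (-max x 0) + (1 - Real.exp (min x 0))) (by fun_prop) 2 (by
      intro x
      have hmax : Real.exp (-max x 0) ≤ 1 := Real.exp_le_one_iff.2 (by simp)
      have hmin : Real.exp (min x 0) ≤ 1 := Real.exp_le_one_iff.2 (by simp)
      rw [Real.norm_eq_abs, abs_le]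
      constructor <;> linarith [Real.exp_pos (-max x 0), Real.exp_pos (min x 0)])

lemma expNegExtension_of_nonneg {x : ℝ} (hx : 0 ≤ x) : expNegExtension x = Real.exp (-x) := by
  simp [expNegExtension, hx]

lemma strictAnti_expNegExtension : StrictAnti expNegExtension := by
  intro x y hxy
  change Real.exp (-max y 0) + (1 - Real.exp (min y 0)) <
    Real.exp (-max x 0) + (1 - Real.exp (min x 0))
  rcases le_or_gt 0 x with hx | hx
  · simp [hx, hx.trans hxy.le, hxy]
  · have hmax : Real.exp (-max y 0) ≤ Real.exp (-max x 0) := by gcongr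
    have hmin : Real.exp (min x 0) < Real.exp (min y 0) :=
      Real.exp_lt_exp.2 (by simp [hx.le, hxy, hx])
    linarith

theorem measure_eq_of_forall_integral_exp_neg_nat_mul_eq {μ ν : Measure ℝ} [IsFiniteMeasure μ]
    [IsFiniteMeasure ν] (hμ : ∀ᵐ x ∂μ, 0 ≤ x) (hν : ∀ᵐ x ∂ν, 0 ≤ x)
    (h : ∀ n : ℕ, ∫ x, Real.exp (-(n * x)) ∂μ = ∫ x, Real.exp (-(n * x)) ∂ν) : μ = ν := by
  have hpow (ρ : Measure ℝ) (hρ : ∀ᵐ x ∂ρ, 0 ≤ x) (n : ℕ) :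
      ∫ x, expNegExtension x ^ n ∂ρ = ∫ x, Real.exp (-(n * x)) ∂ρ :=
    integral_congr_ae <| hρ.mono fun x hx => by
      simp only [expNegExtension_of_nonneg hx, ← Real.exp_nat_mul, mul_neg]
  refine measure_eq_of_forall_integral_pow_eq expNegExtension
    strictAnti_expNegExtension.injective fun n => ?_
  rw [hpow μ hμ, hpow ν hν, h]

theorem ae_eq_of_forall_integral_mul_exp_neg_nat_mul_eq {p q : ℝ → ℝ}
    (hp : IntegrableOn p (Ioi 0)) (hq : IntegrableOn q (Ioi 0))
    (hp0 : 0 ≤ᵐ[volume.restrict (Ioi 0)] p) (hq0 : 0 ≤ᵐ[volume.restrict (Ioi 0)] q)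
    (h : ∀ n : ℕ, ∫ y in Ioi (0 : ℝ), p y * Real.exp (-(n * y)) =
      ∫ y in Ioi (0 : ℝ), q y * Real.exp (-(n * y))) :
    p =ᵐ[volume.restrict (Ioi 0)] q := by
  have := isFiniteMeasure_withDensity_ofReal hp.2
  have := isFiniteMeasure_withDensity_ofReal hq.2
  have hpos (w : ℝ → ℝ≥0∞) : ∀ᵐ y ∂(volume.restrict (Ioi 0)).withDensity w, (0 : ℝ) ≤ y :=
    (withDensity_absolutelyContinuous _ _).ae_le <|
      (ae_restrict_mem measurableSet_Ioi).mono fun y hy => le_of_lt hy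
  have hmeasure : (volume.restrict (Ioi 0)).withDensity (fun y => ENNReal.ofReal (p y)) =
      (volume.restrict (Ioi 0)).withDensity (fun y => ENNReal.ofReal (q y)) :=
    measure_eq_of_forall_integral_exp_neg_nat_mul_eq (hpos _) (hpos _) fun n => by
      rw [integral_withDensity_ofReal hp.aemeasurable hp0,
        integral_withDensity_ofReal hq.aemeasurable hq0, h]
  have hofReal := (withDensity_eq_iff hp.aemeasurable.ennreal_ofReal
    hq.aemeasurable.ennreal_ofReal hp.lintegral_lt_top.ne).1 hmeasure
  filter_upwards [hofReal, hp0, hq0] with y hy hpy hqy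
  exact (ENNReal.ofReal_eq_ofReal_iff hpy hqy).1 hy

lemma integral_Ioi_of_hasDerivAt_of_nonneg_of_tendsto {g g' : ℝ → ℝ} {a L₀ L : ℝ}
    (hderiv : ∀ x ∈ Ioi a, HasDerivAt g (g' x) x) (hg' : ∀ x ∈ Ioi a, 0 ≤ g' x)
    (hL₀ : Tendsto g (𝓝[>] a) (𝓝 L₀)) (hL : Tendsto g atTop (𝓝 L)) :
    IntegrableOn g' (Ioi a) ∧ ∫ x in Ioi a, g' x = L - L₀ := by
  have hcont : ContinuousWithinAt (Function.update g a L₀) (Ici a) a := by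
    rwa [continuousWithinAt_update_same, Ici_sdiff_left]
  have hderiv' : ∀ x ∈ Ioi a, HasDerivAt (Function.update g a L₀) (g' x) x := fun x hx =>
    (hderiv x hx).congr_of_eventuallyEq <| (lt_mem_nhds hx).mono fun u hu =>
      Function.update_of_ne hu.ne' _ _
  have hL' : Tendsto (Function.update g a L₀) atTop (𝓝 L) :=
    hL.congr' <| (eventually_gt_atTop a).mono fun u hu => (Function.update_of_ne hu.ne' _ _).symm
  refine ⟨integrableOn_Ioi_deriv_of_nonneg hcont hderiv' hg' hL', ?_⟩
  rw [integral_Ioi_of_hasDerivAt_of_nonneg hcont hderiv' hg' hL', Function.update_self]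

/-- The primitive of the Gaussian `exp (-u ^ 2)` vanishing at `0`. -/
noncomputable def gaussPrimitive (x : ℝ) : ℝ := ∫ u in (0 : ℝ)..x, Real.exp (-1 * u ^ 2)

lemma hasDerivAt_gaussPrimitive (x : ℝ) :
    HasDerivAt gaussPrimitive (Real.exp (-1 * x ^ 2)) x :=
  (Continuous.integral_hasStrictDerivAt (f := fun u : ℝ => Real.exp (-1 * u ^ 2))
    (by fun_prop) 0 x).hasDerivAt

lemma gaussPrimitive_zero : gaussPrimitive 0 = 0 := intervalIntegral.integral_same

lemma gaussPrimitive_neg (x : ℝ) : gaussPrimitive (-x) = -gaussPrimitive x := by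
  have h := intervalIntegral.integral_comp_neg (a := (0 : ℝ)) (b := x)
    (fun u : ℝ => Real.exp (-1 * u ^ 2))
  simp only [even_two, Even.neg_pow, neg_zero] at h
  rw [gaussPrimitive, gaussPrimitive, intervalIntegral.integral_symm, h]

lemma tendsto_gaussPrimitive_atTop : Tendsto gaussPrimitive atTop (𝓝 (√π / 2)) := by
  have h := intervalIntegral_tendsto_integral_Ioi (0 : ℝ)
    ((integrable_exp_neg_mul_sq (b := 1) one_pos).integrableOn (s := Ioi 0)) tendsto_id
  rwa [integral_gaussian_Ioi, div_one] at h

lemma tendsto_gaussPrimitive_atBot : Tendsto gaussPrimitive atBot (𝓝 (-(√π / 2))) :=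
  (tendsto_gaussPrimitive_atTop.comp tendsto_neg_atBot_atTop).neg.congr fun x => by
    rw [Function.comp_apply, gaussPrimitive_neg, neg_neg]

/-- The density of the one-sided stable law of index `1 / 2`, the Poisson subordinator. -/
noncomputable def stableDensity (t s : ℝ) : ℝ :=
  t / (2 * √π) * (s ^ (-(3 / 2 : ℝ)) * Real.exp (-(t ^ 2 / (4 * s))))

lemma stableDensity_nonneg {t s : ℝ} (ht : 0 ≤ t) (hs : 0 ≤ s) : 0 ≤ stableDensity t s := by
  unfold stableDensity
  positivity

lemma measurable_stableDensity (t : ℝ) : Measurable (stableDensity t) := by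
  unfold stableDensity
  fun_prop

/-- One of the two summands, exchanged by `m ↦ -m`, of a primitive of the function
`s ↦ stableDensity t s * exp (-(m ^ 2 * s))` on the half-line. -/
noncomputable def stablePrimitive (t m s : ℝ) : ℝ :=
  Real.exp (-(t * m)) * gaussPrimitive (t / 2 * s ^ (-(1 / 2 : ℝ)) - m * s ^ (1 / 2 : ℝ))

lemma exp_neg_mul_mul_exp_neg_sq (t m : ℝ) {s : ℝ} (hs : 0 < s) :
    Real.exp (-(t * m)) *
        Real.exp (-1 * (t / 2 * s ^ (-(1 / 2 : ℝ)) - m * s ^ (1 / 2 : ℝ)) ^ 2) =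
      Real.exp (-(t ^ 2 / (4 * s))) * Real.exp (-(m ^ 2 * s)) := by
  rw [Real.rpow_neg hs.le, ← Real.sqrt_eq_rpow, ← Real.exp_add, ← Real.exp_add]
  congr 1
  have : 0 < √s := Real.sqrt_pos.2 hs
  have hsq : √s ^ 2 = s := Real.sq_sqrt hs.le
  nth_rewrite 4 [← hsq]
  nth_rewrite 3 [← hsq]
  field_simp
  ring

lemma hasDerivAt_stablePrimitive (t m : ℝ) {s : ℝ} (hs : 0 < s) :
    HasDerivAt (stablePrimitive t m)
      (-(t / 4 * s ^ (-(3 / 2 : ℝ)) + m / 2 * s ^ (-(1 / 2 : ℝ))) *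
        (Real.exp (-(t ^ 2 / (4 * s))) * Real.exp (-(m ^ 2 * s)))) s := by
  have hneg : HasDerivAt (fun s : ℝ => s ^ (-(1 / 2 : ℝ)))
      (-(1 / 2) * s ^ (-(3 / 2 : ℝ))) s := by
    convert! Real.hasDerivAt_rpow_const (x := s) (p := -(1 / 2 : ℝ)) (Or.inl hs.ne') using 2
    norm_num
  have hpos : HasDerivAt (fun s : ℝ => s ^ (1 / 2 : ℝ)) (1 / 2 * s ^ (-(1 / 2 : ℝ))) s := by
    convert! Real.hasDerivAt_rpow_const (x := s) (p := (1 / 2 : ℝ)) (Or.inl hs.ne') using 2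
    norm_num
  have hderiv := ((hasDerivAt_gaussPrimitive _).comp s
    ((hneg.const_mul (t / 2)).sub (hpos.const_mul m))).const_mul (Real.exp (-(t * m)))
  refine hderiv.congr_deriv ?_
  simp only [Pi.sub_apply]
  rw [← exp_neg_mul_mul_exp_neg_sq t m hs]
  ring

lemma tendsto_stablePrimitive_nhdsGT_zero {t : ℝ} (ht : 0 < t) (m : ℝ) :
    Tendsto (stablePrimitive t m) (𝓝[>] 0) (𝓝 (Real.exp (-(t * m)) * (√π / 2))) := by
  have hneg : Tendsto (fun s : ℝ => t / 2 * s ^ (-(1 / 2 : ℝ))) (𝓝[>] 0) atTop :=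
    (tendsto_rpow_neg_nhdsGT_zero (by norm_num)).const_mul_atTop (by positivity)
  have hpos : Tendsto (fun s : ℝ => -(m * s ^ (1 / 2 : ℝ))) (𝓝[>] 0) (𝓝 0) := by
    have hcont : ContinuousAt (fun s : ℝ => -(m * s ^ (1 / 2 : ℝ))) 0 :=
      (continuousAt_const.mul (Real.continuousAt_rpow_const _ _ (Or.inr (by norm_num)))).neg
    simpa using hcont.tendsto.mono_left (nhdsWithin_le_nhds (s := Ioi 0))
  exact (tendsto_gaussPrimitive_atTop.comp (hneg.atTop_add hpos)).const_mul _

lemma tendsto_stablePrimitive_atTop (t m : ℝ) :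
    Tendsto (stablePrimitive t m) atTop
      (𝓝 (Real.exp (-(t * m)) * (-Real.sign m * (√π / 2)))) := by
  have hneg : Tendsto (fun s : ℝ => t / 2 * s ^ (-(1 / 2 : ℝ))) atTop (𝓝 0) := by
    simpa using (tendsto_rpow_neg_atTop (y := (1 / 2 : ℝ)) (by norm_num)).const_mul (t / 2)
  have hpos : Tendsto (fun s : ℝ => s ^ (1 / 2 : ℝ)) atTop atTop :=
    tendsto_rpow_atTop (by norm_num)
  refine Tendsto.const_mul _ ?_
  simp only [sub_eq_add_neg, ← neg_mul]
  rcases lt_trichotomy m 0 with hm | rfl | hm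
  · rw [Real.sign_of_neg hm, neg_neg, one_mul]
    exact tendsto_gaussPrimitive_atTop.comp
      (hneg.add_atTop (hpos.const_mul_atTop (neg_pos.2 hm)))
  · simp only [Real.sign_zero, neg_zero, zero_mul, add_zero]
    have hcont := (hasDerivAt_gaussPrimitive 0).continuousAt.tendsto.comp hneg
    rwa [gaussPrimitive_zero] at hcont
  · rw [Real.sign_of_pos hm, neg_one_mul]
    exact tendsto_gaussPrimitive_atBot.comp
      (hneg.add_atBot (hpos.const_mul_atTop_of_neg (neg_neg_iff_pos.2 hm)))

theorem integral_stableDensity_mul_exp {t m : ℝ} (ht : 0 < t) (hm : 0 ≤ m) :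
    IntegrableOn (fun s => stableDensity t s * Real.exp (-(m ^ 2 * s))) (Ioi 0) ∧
    ∫ s in Ioi (0 : ℝ), stableDensity t s * Real.exp (-(m ^ 2 * s)) = Real.exp (-(t * m)) := by
  have hderiv : ∀ s ∈ Ioi (0 : ℝ),
      HasDerivAt (fun s => -(1 / √π) * (stablePrimitive t m s + stablePrimitive t (-m) s))
        (stableDensity t s * Real.exp (-(m ^ 2 * s))) s := fun s hs => by
    refine (((hasDerivAt_stablePrimitive t m hs).add
      (hasDerivAt_stablePrimitive t (-m) hs)).const_mul _).congr_deriv ?_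
    rw [stableDensity, neg_sq]
    field_simp
    ring
  have hnonneg : ∀ s ∈ Ioi (0 : ℝ), 0 ≤ stableDensity t s * Real.exp (-(m ^ 2 * s)) :=
    fun s hs => mul_nonneg (stableDensity_nonneg ht.le (le_of_lt hs)) (Real.exp_pos _).le
  obtain ⟨hint, heq⟩ := integral_Ioi_of_hasDerivAt_of_nonneg_of_tendsto hderiv hnonneg
    (((tendsto_stablePrimitive_nhdsGT_zero ht m).add
      (tendsto_stablePrimitive_nhdsGT_zero ht (-m))).const_mul _)
    (((tendsto_stablePrimitive_atTop t m).add
      (tendsto_stablePrimitive_atTop t (-m))).const_mul _)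
  refine ⟨hint, heq.trans ?_⟩
  have : 0 < √π := Real.sqrt_pos.2 Real.pi_pos
  rcases hm.eq_or_lt with rfl | hm
  · simp only [mul_zero, neg_zero, Real.exp_zero, Real.sign_zero]
    field_simp
    ring
  · rw [Real.sign_neg, Real.sign_of_pos hm]
    field_simp
    ring

lemma integrableOn_stableDensity {t : ℝ} (ht : 0 < t) :
    IntegrableOn (stableDensity t) (Ioi 0) := by
  simpa using (integral_stableDensity_mul_exp ht le_rfl).1

lemma integral_stableDensity {t : ℝ} (ht : 0 < t) :
    ∫ s in Ioi (0 : ℝ), stableDensity t s = 1 := by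
  simpa using (integral_stableDensity_mul_exp ht le_rfl).2

/-- The one-sided stable law of index `1 / 2`. -/
noncomputable def stableMeasure (t : ℝ) : Measure ℝ :=
  (volume.restrict (Ioi 0)).withDensity fun s => ENNReal.ofReal (stableDensity t s)

lemma isFiniteMeasure_stableMeasure {t : ℝ} (ht : 0 < t) :
    IsFiniteMeasure (stableMeasure t) :=
  isFiniteMeasure_withDensity_ofReal (integrableOn_stableDensity ht).2

lemma ae_pos_stableMeasure (t : ℝ) : ∀ᵐ s ∂(stableMeasure t), 0 < s :=
  (withDensity_absolutelyContinuous _ _).ae_le (ae_restrict_mem measurableSet_Ioi)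

lemma ae_pos_stableMeasure_conv {t u : ℝ} (ht : 0 < t) (hu : 0 < u) :
    ∀ᵐ s ∂(stableMeasure t ∗ stableMeasure u), 0 < s := by
  have := isFiniteMeasure_stableMeasure ht
  have := isFiniteMeasure_stableMeasure hu
  rw [Measure.conv, ae_map_iff (by fun_prop) measurableSet_Ioi]
  filter_upwards [Measure.quasiMeasurePreserving_fst.ae (ae_pos_stableMeasure t),
    Measure.quasiMeasurePreserving_snd.ae (ae_pos_stableMeasure u)] with p hp₁ hp₂
  exact add_pos hp₁ hp₂

lemma integral_stableMeasure {t : ℝ} (ht : 0 < t) (g : ℝ → ℝ) :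
    ∫ s, g s ∂(stableMeasure t) = ∫ s in Ioi (0 : ℝ), stableDensity t s * g s :=
  integral_withDensity_ofReal (measurable_stableDensity t).aemeasurable
    ((ae_restrict_mem measurableSet_Ioi).mono fun _ hs =>
      stableDensity_nonneg ht.le (le_of_lt hs)) g

lemma integral_exp_neg_nat_mul_stableMeasure {t : ℝ} (ht : 0 < t) (n : ℕ) :
    ∫ s, Real.exp (-(n * s)) ∂(stableMeasure t) = Real.exp (-(t * √n)) := by
  have h := (integral_stableDensity_mul_exp ht (Real.sqrt_nonneg n)).2
  rwa [Real.sq_sqrt n.cast_nonneg, ← integral_stableMeasure ht] at h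

theorem stableMeasure_conv {t u : ℝ} (ht : 0 < t) (hu : 0 < u) :
    stableMeasure t ∗ stableMeasure u = stableMeasure (t + u) := by
  have := isFiniteMeasure_stableMeasure ht
  have := isFiniteMeasure_stableMeasure hu
  have := isFiniteMeasure_stableMeasure (add_pos ht hu)
  have hconv := ae_pos_stableMeasure_conv ht hu
  refine measure_eq_of_forall_integral_exp_neg_nat_mul_eq (hconv.mono fun _ => le_of_lt)
    ((ae_pos_stableMeasure _).mono fun _ => le_of_lt) fun n => ?_
  have hint : Integrable (fun s : ℝ => Real.exp (-(n * s))) (stableMeasure t ∗ stableMeasure u) :=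
    Integrable.of_bound (by fun_prop) 1 <| hconv.mono fun s hs => by
      rw [Real.norm_of_nonneg (Real.exp_pos _).le, Real.exp_le_one_iff]
      exact neg_nonpos.2 (by positivity)
  rw [integral_conv hint]
  simp only [mul_add, neg_add, Real.exp_add, integral_const_mul, integral_mul_const,
    integral_exp_neg_nat_mul_stableMeasure ht, integral_exp_neg_nat_mul_stableMeasure hu,
    integral_exp_neg_nat_mul_stableMeasure (add_pos ht hu), add_mul]

theorem integral_stableDensity_add {t u M : ℝ} (ht : 0 < t) (hu : 0 < u) {g : ℝ → ℝ}
    (hg : Measurable g) (hM : ∀ s > 0, |g s| ≤ M) :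
    ∫ s in Ioi (0 : ℝ), stableDensity t s *
      ∫ s' in Ioi (0 : ℝ), stableDensity u s' * g (s + s') =
    ∫ s in Ioi (0 : ℝ), stableDensity (t + u) s * g s := by
  have := isFiniteMeasure_stableMeasure ht
  have := isFiniteMeasure_stableMeasure hu
  have hint : Integrable g (stableMeasure t ∗ stableMeasure u) :=
    Integrable.of_bound hg.aestronglyMeasurable M
      ((ae_pos_stableMeasure_conv ht hu).mono hM)
  simp only [← integral_stableMeasure (add_pos ht hu), ← integral_stableMeasure ht,
    ← integral_stableMeasure hu, ← integral_conv hint, stableMeasure_conv ht hu]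

open Polynomial in
/-- The polynomials `p` for which the `n`-th time derivative of `stableDensity t s` is
`t⁻ⁿ * p (t ^ 2 / s) * stableDensity t s`. -/
noncomputable def stablePoly : ℕ → Polynomial ℝ
  | 0 => 1
  | n + 1 => -(C (n : ℝ)) * stablePoly n + 2 * X * derivative (stablePoly n) +
      (1 - C (1 / 2) * X) * stablePoly n

/-- The `n`-th derivative of `stableDensity t s` in the time variable `t`. -/
noncomputable def stableDeriv (n : ℕ) (t s : ℝ) : ℝ :=
  (t ^ n)⁻¹ * (stablePoly n).eval (t ^ 2 / s) * stableDensity t s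

lemma stableDeriv_zero : stableDeriv 0 = stableDensity := by
  ext t s
  simp [stableDeriv, stablePoly]

lemma measurable_stableDeriv (n : ℕ) (t : ℝ) : Measurable (stableDeriv n t) := by
  have hpoly : Measurable fun s : ℝ => (stablePoly n).eval (t ^ 2 / s) :=
    (stablePoly n).continuous.measurable.comp (by fun_prop)
  exact (hpoly.const_mul _).mul (measurable_stableDensity t)

lemma hasDerivAt_stableDensity {t : ℝ} (ht : t ≠ 0) (s : ℝ) :
    HasDerivAt (fun t => stableDensity t s) ((1 / t - t / (2 * s)) * stableDensity t s) t := by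
  have hexp := ((hasDerivAt_pow 2 t).div_const (4 * s)).neg.exp
  refine (((hasDerivAt_id t).div_const (2 * √π)).mul
    (hexp.const_mul (s ^ (-(3 / 2 : ℝ))))).congr_deriv ?_
  simp only [stableDensity, id, Nat.cast_ofNat, Pi.neg_apply]
  field_simp
  ring

lemma hasDerivAt_stableDeriv (n : ℕ) {t : ℝ} (ht : t ≠ 0) (s : ℝ) :
    HasDerivAt (fun t => stableDeriv n t s) (stableDeriv (n + 1) t s) t := by
  have hpoly := ((stablePoly n).hasDerivAt (t ^ 2 / s)).comp t ((hasDerivAt_pow 2 t).div_const s)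
  have hinv : HasDerivAt (fun t : ℝ => (t ^ n)⁻¹) (-n * (t ^ (n + 1))⁻¹) t := by
    refine ((hasDerivAt_pow n t).inv (pow_ne_zero n ht)).congr_deriv ?_
    cases n with
    | zero => simp
    | succ n =>
      rw [Nat.add_sub_cancel]
      field_simp
      ring
  refine ((hinv.mul hpoly).mul (hasDerivAt_stableDensity ht s)).congr_deriv ?_
  simp only [stableDeriv, stablePoly, Function.comp, Polynomial.eval_add, Polynomial.eval_mul,
    Polynomial.eval_neg, Polynomial.eval_C, Polynomial.eval_X, Polynomial.eval_sub,
    Polynomial.eval_one, Polynomial.eval_ofNat, Pi.mul_apply, pow_succ]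
  field_simp
  ring

lemma exists_abs_eval_le_exp (p : Polynomial ℝ) {ε : ℝ} (hε : 0 < ε) :
    ∃ C > 0, ∀ w ≥ 0, |p.eval w| ≤ C * Real.exp (ε * w) := by
  induction p using Polynomial.induction_on' with
  | add p q hp hq =>
    obtain ⟨C, hC, hp⟩ := hp
    obtain ⟨D, hD, hq⟩ := hq
    refine ⟨C + D, add_pos hC hD, fun w hw => ?_⟩
    rw [Polynomial.eval_add, add_mul]
    exact (abs_add_le _ _).trans (add_le_add (hp w hw) (hq w hw))
  | monomial n a =>
    refine ⟨(|a| + 1) * ((ε ^ n)⁻¹ * n.factorial), by positivity, fun w hw => ?_⟩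
    have hpow : w ^ n ≤ (ε ^ n)⁻¹ * n.factorial * Real.exp (ε * w) := by
      have h := Real.pow_div_factorial_le_exp (ε * w) (by positivity) n
      rw [div_le_iff₀ (by positivity), mul_pow, ← le_div_iff₀' (by positivity)] at h
      exact h.trans_eq (by ring)
    rw [Polynomial.eval_monomial, abs_mul, abs_pow, abs_of_nonneg hw, mul_assoc]
    gcongr
    exact le_add_of_nonneg_right zero_le_one

lemma exp_mul_stableDensity (t s : ℝ) :
    Real.exp (1 / 8 * (t ^ 2 / s)) * stableDensity t s = √2 * stableDensity (t / √2) s := by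
  have hexp : Real.exp (-((t / √2) ^ 2 / (4 * s))) =
      Real.exp (1 / 8 * (t ^ 2 / s)) * Real.exp (-(t ^ 2 / (4 * s))) := by
    rw [← Real.exp_add, div_pow, Real.sq_sqrt zero_le_two]
    congr 1
    field
  rw [stableDensity, stableDensity, hexp]
  field_simp

lemma exists_abs_stableDeriv_le (n : ℕ) : ∃ C > 0, ∀ t > 0, ∀ s > 0,
    |stableDeriv n t s| ≤ C * (t ^ n)⁻¹ * stableDensity (t / √2) s := by
  obtain ⟨C, hC, hpoly⟩ := exists_abs_eval_le_exp (stablePoly n) (show (0 : ℝ) < 1 / 8 by norm_num)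
  refine ⟨C * √2, by positivity, fun t ht s hs => ?_⟩
  have hnonneg := stableDensity_nonneg ht.le hs.le
  calc |stableDeriv n t s|
      = (t ^ n)⁻¹ * |(stablePoly n).eval (t ^ 2 / s)| * stableDensity t s := by
        rw [stableDeriv, abs_mul, abs_mul, abs_of_nonneg hnonneg, abs_of_pos (by positivity)]
    _ ≤ (t ^ n)⁻¹ * (C * Real.exp (1 / 8 * (t ^ 2 / s))) * stableDensity t s := by
        gcongr
        exact hpoly _ (by positivity)
    _ = C * (t ^ n)⁻¹ * (Real.exp (1 / 8 * (t ^ 2 / s)) * stableDensity t s) := by ring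
    _ = C * √2 * (t ^ n)⁻¹ * stableDensity (t / √2) s := by
        rw [exp_mul_stableDensity]
        ring

lemma integrableOn_stableDeriv (n : ℕ) {t : ℝ} (ht : 0 < t) :
    IntegrableOn (stableDeriv n t) (Ioi 0) := by
  obtain ⟨C, -, hle⟩ := exists_abs_stableDeriv_le n
  exact ((integrableOn_stableDensity (t := t / √2) (by positivity)).const_mul _).mono'
    (measurable_stableDeriv n t).aestronglyMeasurable
    ((ae_restrict_mem measurableSet_Ioi).mono (hle t ht))

lemma exists_integral_abs_stableDeriv_le (n : ℕ) : ∃ C > 0, ∀ t > 0,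
    ∫ s in Ioi (0 : ℝ), |stableDeriv n t s| ≤ C * (t ^ n)⁻¹ := by
  obtain ⟨C, hC, hle⟩ := exists_abs_stableDeriv_le n
  refine ⟨C, hC, fun t ht => ?_⟩
  have ht' : 0 < t / √2 := by positivity
  calc ∫ s in Ioi (0 : ℝ), |stableDeriv n t s|
      ≤ ∫ s in Ioi (0 : ℝ), C * (t ^ n)⁻¹ * stableDensity (t / √2) s :=
        setIntegral_mono_on (integrableOn_stableDeriv n ht).abs
          ((integrableOn_stableDensity ht').const_mul _) measurableSet_Ioi (hle t ht)
    _ = C * (t ^ n)⁻¹ := by rw [integral_const_mul, integral_stableDensity ht', mul_one]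

lemma stableDensity_le_of_mem_Ioo {t₀ t s : ℝ} (ht₀ : 0 < t₀) (hs : 0 ≤ s)
    (ht : t ∈ Ioo (t₀ / 2) (2 * t₀)) : stableDensity t s ≤ 4 * stableDensity (t₀ / 2) s := by
  unfold stableDensity
  rw [← mul_assoc 4]
  have hprefactor : t / (2 * √π) ≤ 4 * (t₀ / 2 / (2 * √π)) := by
    rw [← mul_div_assoc]
    gcongr
    linarith [ht.2]
  gcongr
  exact ht.1.le

theorem hasDerivAt_integral_stableDeriv (n : ℕ) {t₀ M : ℝ} (ht₀ : 0 < t₀) {g : ℝ → ℝ}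
    (hg : Measurable g) (hM : ∀ s > 0, |g s| ≤ M) :
    HasDerivAt (fun t => ∫ s in Ioi (0 : ℝ), stableDeriv n t s * g s)
      (∫ s in Ioi (0 : ℝ), stableDeriv (n + 1) t₀ s * g s) t₀ := by
  obtain ⟨C, hC, hle⟩ := exists_abs_stableDeriv_le (n + 1)
  have hpos {t : ℝ} (ht : t ∈ Ioo (t₀ / 2) (2 * t₀)) : 0 < t := (half_pos ht₀).trans ht.1
  have hmeas (k : ℕ) (t : ℝ) :
      AEStronglyMeasurable (fun s => stableDeriv k t s * g s) (volume.restrict (Ioi 0)) :=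
    ((measurable_stableDeriv k t).mul hg).aestronglyMeasurable
  have hdom : ∀ᵐ s ∂volume.restrict (Ioi 0), ∀ t ∈ Ioo (t₀ / 2) (2 * t₀),
      ‖stableDeriv (n + 1) t s * g s‖ ≤
        C * ((t₀ / 2) ^ (n + 1))⁻¹ * (4 * stableDensity (t₀ / √2 / 2) s) * M := by
    filter_upwards [ae_restrict_mem measurableSet_Ioi] with s hs t ht
    have hs' : 0 ≤ s := le_of_lt hs
    have ht' : t / √2 ∈ Ioo (t₀ / √2 / 2) (2 * (t₀ / √2)) := by
      rw [div_right_comm, ← mul_div_assoc]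
      exact ⟨by gcongr; exact ht.1, by gcongr; exact ht.2⟩
    have hstable := stableDensity_le_of_mem_Ioo (by positivity) hs' ht'
    have hnonneg := stableDensity_nonneg (div_nonneg (hpos ht).le (Real.sqrt_nonneg 2)) hs'
    rw [norm_mul]
    refine mul_le_mul ((hle t (hpos ht) s hs).trans ?_) (hM s hs) (norm_nonneg _)
      (mul_nonneg (by positivity) (hnonneg.trans hstable))
    gcongr
    exact ht.1.le
  refine (hasDerivAt_integral_of_dominated_loc_of_deriv_le
    (Ioo_mem_nhds (by linarith) (by linarith)) (.of_forall fun t => hmeas n t)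
    ((integrableOn_stableDeriv n ht₀).mul_bdd hg.aestronglyMeasurable
      ((ae_restrict_mem measurableSet_Ioi).mono hM))
    (hmeas (n + 1) t₀) hdom ?_ ?_).2
  · exact (((integrableOn_stableDensity (by positivity)).const_mul 4).const_mul _).mul_const M
  · exact .of_forall fun s t ht => (hasDerivAt_stableDeriv n (hpos ht).ne' s).mul_const (g s)

lemma eqOn_iteratedDeriv_of_hasDerivAt {F : ℕ → ℝ → ℝ} {U : Set ℝ} (hU : IsOpen U)
    (hF : ∀ n, ∀ t ∈ U, HasDerivAt (F n) (F (n + 1) t) t) (n : ℕ) :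
    EqOn (iteratedDeriv n (F 0)) (F n) U := by
  induction n with
  | zero => intro t _; rw [iteratedDeriv_zero]
  | succ n ih =>
    intro t ht
    rw [iteratedDeriv_succ, (ih.eventuallyEq_of_mem (hU.mem_nhds ht)).deriv_eq,
      (hF n t ht).deriv]

theorem iteratedDeriv_integral_stableDensity (n : ℕ) {M : ℝ} {g : ℝ → ℝ} (hg : Measurable g)
    (hM : ∀ s > 0, |g s| ≤ M) {t : ℝ} (ht : 0 < t) :
    iteratedDeriv n (fun t => ∫ s in Ioi (0 : ℝ), stableDensity t s * g s) t =
      ∫ s in Ioi (0 : ℝ), stableDeriv n t s * g s := by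
  rw [← stableDeriv_zero]
  exact eqOn_iteratedDeriv_of_hasDerivAt
    (F := fun n t => ∫ s in Ioi (0 : ℝ), stableDeriv n t s * g s) isOpen_Ioi
    (fun n t ht => hasDerivAt_integral_stableDeriv n ht hg hM) n ht

lemma integral_stableDeriv_eq_of_integral_stableDensity_eq {g h : ℝ → ℝ} {M N u : ℝ} {n : ℕ}
    (hu : 0 < u) (hg : Measurable g) (hgM : ∀ s > 0, |g s| ≤ M)
    (hh : Measurable h) (hhN : ∀ s > 0, |h s| ≤ N)
    (heq : ∀ t > 0, ∫ s in Ioi (0 : ℝ), stableDensity t s * h s =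
      ∫ s in Ioi (0 : ℝ), stableDeriv n (t + u) s * g s) (m : ℕ) {t : ℝ} (ht : 0 < t) :
    ∫ s in Ioi (0 : ℝ), stableDeriv m t s * h s =
      ∫ s in Ioi (0 : ℝ), stableDeriv (n + m) (t + u) s * g s := by
  have hevent : (fun t => ∫ s in Ioi (0 : ℝ), stableDensity t s * h s) =ᶠ[𝓝 t]
      fun t => ∫ s in Ioi (0 : ℝ), stableDeriv n (t + u) s * g s :=
    (lt_mem_nhds ht).mono heq
  rw [← iteratedDeriv_integral_stableDensity m hh hhN ht, hevent.iteratedDeriv_eq m]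
  exact eqOn_iteratedDeriv_of_hasDerivAt
    (F := fun m t => ∫ s in Ioi (0 : ℝ), stableDeriv (n + m) (t + u) s * g s) isOpen_Ioi
    (fun m t ht => (hasDerivAt_integral_stableDeriv (n + m) (add_pos ht hu) hg hgM).comp_add_const
      t u) m ht

lemma measurable_integral_stableDeriv_mul_comp_add (n : ℕ) (u : ℝ) {g : ℝ → ℝ}
    (hg : Measurable g) :
    Measurable fun s => ∫ s' in Ioi (0 : ℝ), stableDeriv n u s' * g (s + s') :=
  (StronglyMeasurable.integral_prod_right (f := fun s s' => stableDeriv n u s' * g (s + s'))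
    (((measurable_stableDeriv n u).comp measurable_snd).mul
      (hg.comp measurable_add)).stronglyMeasurable).measurable

lemma abs_integral_stableDeriv_mul_comp_add_le (n : ℕ) {u M : ℝ} (hu : 0 < u) {g : ℝ → ℝ}
    (hM : ∀ s > 0, |g s| ≤ M) : ∀ s > 0,
    |∫ s' in Ioi (0 : ℝ), stableDeriv n u s' * g (s + s')| ≤
      (∫ s' in Ioi (0 : ℝ), |stableDeriv n u s'|) * M := fun _ hs =>
  abs_integral_mul_le (integrableOn_stableDeriv n hu) <|
    (ae_restrict_mem measurableSet_Ioi).mono fun _ hs' => hM _ (add_pos hs hs')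

theorem integral_stableDeriv_add (m k : ℕ) {t u M : ℝ} (ht : 0 < t) (hu : 0 < u) {g : ℝ → ℝ}
    (hg : Measurable g) (hM : ∀ s > 0, |g s| ≤ M) :
    ∫ s in Ioi (0 : ℝ), stableDeriv m t s *
      ∫ s' in Ioi (0 : ℝ), stableDeriv k u s' * g (s + s') =
    ∫ s in Ioi (0 : ℝ), stableDeriv (m + k) (t + u) s * g s := by
  have hswap (m k : ℕ) {t u : ℝ} (ht : 0 < t) (hu : 0 < u) :
      ∫ s in Ioi (0 : ℝ), stableDeriv m t s *
        ∫ s' in Ioi (0 : ℝ), stableDeriv k u s' * g (s + s') =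
      ∫ s in Ioi (0 : ℝ), stableDeriv k u s *
        ∫ s' in Ioi (0 : ℝ), stableDeriv m t s' * g (s + s') := by
    simp_rw [integral_mul_integral_mul_comm (integrableOn_stableDeriv m ht)
      (integrableOn_stableDeriv k hu) (F := fun s s' => g (s + s')) (hg.comp measurable_add)
      ((ae_restrict_mem measurableSet_Ioi).mono fun _ hs =>
        (ae_restrict_mem measurableSet_Ioi).mono fun _ hs' => hM _ (add_pos hs hs')), add_comm]
  have hleft (u : ℝ) (hu : 0 < u) : ∫ s in Ioi (0 : ℝ), stableDeriv m t s *
      ∫ s' in Ioi (0 : ℝ), stableDeriv 0 u s' * g (s + s') =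
      ∫ s in Ioi (0 : ℝ), stableDeriv (0 + m) (t + u) s * g s :=
    integral_stableDeriv_eq_of_integral_stableDensity_eq hu hg hM
      (measurable_integral_stableDeriv_mul_comp_add 0 u hg)
      (abs_integral_stableDeriv_mul_comp_add_le 0 hu hM)
      (fun t ht => by simpa only [stableDeriv_zero] using integral_stableDensity_add ht hu hg hM)
      m ht
  rw [hswap m k ht hu, add_comm t u]
  refine integral_stableDeriv_eq_of_integral_stableDensity_eq ht hg hM
    (measurable_integral_stableDeriv_mul_comp_add m t hg)
    (abs_integral_stableDeriv_mul_comp_add_le m ht hM) (fun u hu => ?_) k hu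
  rw [← stableDeriv_zero, hswap 0 m hu ht, hleft u hu, zero_add, add_comm]

/-- A jointly measurable family of transition densities `p s x y` with respect to `μ`, for times
`s > 0`, that integrate to `1` in `y` and satisfy the Chapman–Kolmogorov equation. -/
structure IsMarkovDensity {E : Type*} [MeasurableSpace E] (μ : Measure E) (p : ℝ → E → E → ℝ) :
    Prop where
  measurable : Measurable fun q : ℝ × E × E => p q.1 q.2.1 q.2.2
  nonneg : ∀ s > 0, ∀ x y, 0 ≤ p s x y
  integral_eq_one : ∀ s > 0, ∀ x, ∫ y, p s x y ∂μ = 1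
  integral_mul_ae_eq : ∀ s > 0, ∀ u > 0, ∀ x,
    (fun z => ∫ y, p s x y * p u y z ∂μ) =ᵐ[μ] p (s + u) x

section MarkovDensity

variable {E : Type*} [MeasurableSpace E] (μ : Measure E) (p : ℝ → E → E → ℝ)

/-- The operator at time `s` of the semigroup with transition densities `p` with respect to `μ`. -/
noncomputable def heatOp (s : ℝ) (f : E → ℝ) (x : E) : ℝ := ∫ y, p s x y * f y ∂μ

/-- The `n`-th time derivative at `t` of the Poisson semigroup subordinated to `heatOp μ p`;
for `n = 0` this is the Poisson semigroup itself. -/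
noncomputable def poissonDeriv (n : ℕ) (t : ℝ) (f : E → ℝ) (x : E) : ℝ :=
  ∫ s in Ioi (0 : ℝ), stableDeriv n t s * heatOp μ p s f x

/-- The Lipschitz condition of order `β` on `S`, with constant `A`, tested on the `k`-th time
derivative of the Poisson semigroup. -/
def PoissonLipschitz (S : Set E) (f : E → ℝ) (β : ℝ) (k : ℕ) (A : ℝ) : Prop :=
  ∀ t > 0, ∀ x ∈ S, |poissonDeriv μ p k t f x| ≤ A * t ^ (β - k)

namespace IsMarkovDensity

variable {μ p} {f : E → ℝ} {M : ℝ}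

lemma integrable (hp : IsMarkovDensity μ p) {s : ℝ} (hs : 0 < s) (x : E) :
    Integrable (p s x) μ :=
  Integrable.of_integral_ne_zero (by simp [hp.integral_eq_one s hs x])

lemma abs_heatOp_le (hp : IsMarkovDensity μ p) (hM : ∀ᵐ y ∂μ, |f y| ≤ M) (x : E) :
    ∀ s > 0, |heatOp μ p s f x| ≤ M := fun s hs => by
  refine (abs_integral_mul_le (hp.integrable hs x) hM).trans_eq ?_
  simp only [abs_of_nonneg (hp.nonneg s hs x _), hp.integral_eq_one s hs x, one_mul]

lemma abs_poissonDeriv_le (hp : IsMarkovDensity μ p) (hM : ∀ᵐ y ∂μ, |f y| ≤ M) (n : ℕ) {t : ℝ}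
    (ht : 0 < t) (x : E) :
    |poissonDeriv μ p n t f x| ≤ (∫ s in Ioi (0 : ℝ), |stableDeriv n t s|) * M :=
  abs_integral_mul_le (integrableOn_stableDeriv n ht)
    ((ae_restrict_mem measurableSet_Ioi).mono (hp.abs_heatOp_le hM x))

lemma tendsto_poissonDeriv_atTop (hp : IsMarkovDensity μ p) (hM : ∀ᵐ y ∂μ, |f y| ≤ M) {n : ℕ}
    (hn : n ≠ 0) (x : E) : Tendsto (fun t => poissonDeriv μ p n t f x) atTop (𝓝 0) := by
  obtain ⟨C, -, hle⟩ := exists_integral_abs_stableDeriv_le n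
  have hM0 : 0 ≤ M := (abs_nonneg _).trans (hp.abs_heatOp_le hM x 1 one_pos)
  refine squeeze_zero_norm' (a := fun t => C * (t ^ n)⁻¹ * M) ?_ ?_
  · filter_upwards [eventually_gt_atTop 0] with t ht
    exact (hp.abs_poissonDeriv_le hM n ht x).trans (mul_le_mul_of_nonneg_right (hle t ht) hM0)
  · simpa using ((tendsto_pow_atTop hn).inv_tendsto_atTop.const_mul C).mul_const M

variable [SFinite μ]

lemma measurable_heatOp (hp : IsMarkovDensity μ p) (hf : Measurable f) :
    Measurable fun q : ℝ × E => heatOp μ p q.1 f q.2 :=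
  (StronglyMeasurable.integral_prod_right (f := fun (q : ℝ × E) y => p q.1 q.2 y * f y)
    ((hp.measurable.comp (by fun_prop : Measurable fun r : (ℝ × E) × E =>
      (r.1.1, r.1.2, r.2))).mul (hf.comp measurable_snd)).stronglyMeasurable).measurable

lemma measurable_heatOp_left (hp : IsMarkovDensity μ p) (hf : Measurable f) (x : E) :
    Measurable fun s => heatOp μ p s f x :=
  (hp.measurable_heatOp hf).comp measurable_prodMk_right

lemma heatOp_heatOp (hp : IsMarkovDensity μ p) (hf : Measurable f) (hM : ∀ᵐ y ∂μ, |f y| ≤ M)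
    {s u : ℝ} (hs : 0 < s) (hu : 0 < u) (x : E) :
    heatOp μ p s (heatOp μ p u f) x = heatOp μ p (s + u) f x := by
  calc heatOp μ p s (heatOp μ p u f) x
      = ∫ z, (∫ y, p s x y * p u y z ∂μ) * f z ∂μ :=
        integral_mul_integral_kernel_mul (hp.integrable hs x)
          (hp.measurable.comp (measurable_prodMk_left (x := u)))
          (.of_forall fun y z => hp.nonneg u hu y z)
          (.of_forall fun y => hp.integral_eq_one u hu y) hf hM
    _ = heatOp μ p (s + u) f x :=
        integral_congr_ae <| (hp.integral_mul_ae_eq s hs u hu x).mono fun z hz => by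
          simp only [hz]

lemma heatOp_poissonDeriv (hp : IsMarkovDensity μ p) (hf : Measurable f)
    (hM : ∀ᵐ y ∂μ, |f y| ≤ M) (n : ℕ) {s u : ℝ} (hs : 0 < s) (hu : 0 < u) (x : E) :
    heatOp μ p s (poissonDeriv μ p n u f) x =
      ∫ s' in Ioi (0 : ℝ), stableDeriv n u s' * heatOp μ p (s + s') f x := by
  calc heatOp μ p s (poissonDeriv μ p n u f) x
      = ∫ s' in Ioi (0 : ℝ), stableDeriv n u s' * heatOp μ p s (heatOp μ p s' f) x :=
        integral_mul_integral_mul_comm (F := fun y s' => heatOp μ p s' f y) (hp.integrable hs x)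
          (integrableOn_stableDeriv n hu) ((hp.measurable_heatOp hf).comp measurable_swap)
          (.of_forall fun y => (ae_restrict_mem measurableSet_Ioi).mono (hp.abs_heatOp_le hM y))
    _ = ∫ s' in Ioi (0 : ℝ), stableDeriv n u s' * heatOp μ p (s + s') f x :=
        setIntegral_congr_fun measurableSet_Ioi fun s' hs' => by
          simp only [hp.heatOp_heatOp hf hM hs hs']

lemma poissonDeriv_eq_integral (hp : IsMarkovDensity μ p) (hf : Measurable f)
    (hM : ∀ᵐ y ∂μ, |f y| ≤ M) (n : ℕ) {t : ℝ} (ht : 0 < t) (x : E) :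
    poissonDeriv μ p n t f x = ∫ y, (∫ s in Ioi (0 : ℝ), stableDeriv n t s * p s x y) * f y ∂μ :=
  integral_mul_integral_kernel_mul (k := fun s y => p s x y) (integrableOn_stableDeriv n ht)
    (hp.measurable.comp (by fun_prop : Measurable fun q : ℝ × E => (q.1, x, q.2)))
    ((ae_restrict_mem measurableSet_Ioi).mono fun s hs => hp.nonneg s hs x)
    ((ae_restrict_mem measurableSet_Ioi).mono fun s hs => hp.integral_eq_one s hs x) hf hM

theorem poissonDeriv_add (hp : IsMarkovDensity μ p) (hf : Measurable f)
    (hM : ∀ᵐ y ∂μ, |f y| ≤ M) (m k : ℕ) {t u : ℝ} (ht : 0 < t) (hu : 0 < u) (x : E) :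
    poissonDeriv μ p m t (poissonDeriv μ p k u f) x = poissonDeriv μ p (m + k) (t + u) f x := by
  calc poissonDeriv μ p m t (poissonDeriv μ p k u f) x
      = ∫ s in Ioi (0 : ℝ), stableDeriv m t s *
          ∫ s' in Ioi (0 : ℝ), stableDeriv k u s' * heatOp μ p (s + s') f x :=
        setIntegral_congr_fun measurableSet_Ioi fun s hs => by
          simp only [hp.heatOp_poissonDeriv hf hM k hs hu]
    _ = poissonDeriv μ p (m + k) (t + u) f x :=
        integral_stableDeriv_add m k ht hu (hp.measurable_heatOp_left hf x)
          (hp.abs_heatOp_le hM x)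

lemma hasDerivAt_poissonDeriv (hp : IsMarkovDensity μ p) (hf : Measurable f)
    (hM : ∀ᵐ y ∂μ, |f y| ≤ M) (n : ℕ) (x : E) {t : ℝ} (ht : 0 < t) :
    HasDerivAt (fun t => poissonDeriv μ p n t f x) (poissonDeriv μ p (n + 1) t f x) t :=
  hasDerivAt_integral_stableDeriv n ht (hp.measurable_heatOp_left hf x) (hp.abs_heatOp_le hM x)

theorem iteratedDeriv_poissonDeriv_zero (hp : IsMarkovDensity μ p) (hf : Measurable f)
    (hM : ∀ᵐ y ∂μ, |f y| ≤ M) (n : ℕ) (x : E) {t : ℝ} (ht : 0 < t) :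
    iteratedDeriv n (fun t => poissonDeriv μ p 0 t f x) t = poissonDeriv μ p n t f x :=
  eqOn_iteratedDeriv_of_hasDerivAt (F := fun n t => poissonDeriv μ p n t f x) isOpen_Ioi
    (fun n _ ht => hp.hasDerivAt_poissonDeriv hf hM n x ht) n ht

theorem pi {ι : Type*} [Fintype ι] {E : ι → Type*} [∀ i, MeasurableSpace (E i)]
    {μ : ∀ i, Measure (E i)} [∀ i, SigmaFinite (μ i)] {p : ∀ i, ℝ → E i → E i → ℝ}
    (hp : ∀ i, IsMarkovDensity (μ i) (p i)) :
    IsMarkovDensity (Measure.pi μ) fun s x y => ∏ i, p i s (x i) (y i) where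
  measurable := Finset.measurable_prod _ fun i _ =>
    (hp i).measurable.comp
      (by fun_prop : Measurable fun q : ℝ × (∀ i, E i) × (∀ i, E i) => (q.1, q.2.1 i, q.2.2 i))
  nonneg s hs x y := Finset.prod_nonneg fun i _ => (hp i).nonneg s hs (x i) (y i)
  integral_eq_one s hs x := by
    rw [integral_fintype_prod_eq_prod fun i y => p i s (x i) y]
    exact Finset.prod_eq_one fun i _ => (hp i).integral_eq_one s hs (x i)
  integral_mul_ae_eq s hs u hu x := by
    have hcoord (i : ι) := (Measure.quasiMeasurePreserving_eval μ i).ae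
      ((hp i).integral_mul_ae_eq s hs u hu (x i))
    filter_upwards [ae_all_iff.2 hcoord] with z hz
    simp only [← Finset.prod_mul_distrib]
    rw [integral_fintype_prod_eq_prod fun i y => p i s (x i) y * p i u y (z i)]
    exact Finset.prod_congr rfl fun i _ => hz i

end IsMarkovDensity

namespace PoissonLipschitz

variable {μ p} [SFinite μ] {f : E → ℝ} {M : ℝ} {S : Set E} {β A : ℝ}

theorem exists_add (hp : IsMarkovDensity μ p) (hS : ∀ᵐ y ∂μ, y ∈ S) (β : ℝ) (m k : ℕ) :
    ∃ C > 0, ∀ f : E → ℝ, Measurable f → (∃ M, ∀ᵐ y ∂μ, |f y| ≤ M) → ∀ A,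
      PoissonLipschitz μ p S f β k A → PoissonLipschitz μ p S f β (m + k) (C * A) := by
  obtain ⟨C, hC, hle⟩ := exists_integral_abs_stableDeriv_le m
  refine ⟨C * (2 : ℝ)⁻¹ ^ (β - (m + k : ℕ)), by positivity, fun f hf ⟨M, hM⟩ A hA t ht x hx => ?_⟩
  have ht' : 0 < t / 2 := half_pos ht
  have hbound : ∀ y ∈ S, |poissonDeriv μ p k (t / 2) f y| ≤ A * (t / 2) ^ (β - k) := hA _ ht'
  calc |poissonDeriv μ p (m + k) t f x|
      = |poissonDeriv μ p m (t / 2) (poissonDeriv μ p k (t / 2) f) x| := by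
        rw [hp.poissonDeriv_add hf hM m k ht' ht', add_halves]
    _ ≤ (∫ s in Ioi (0 : ℝ), |stableDeriv m (t / 2) s|) * (A * (t / 2) ^ (β - k)) :=
        hp.abs_poissonDeriv_le (hS.mono hbound) m ht' x
    _ ≤ C * ((t / 2) ^ m)⁻¹ * (A * (t / 2) ^ (β - k)) :=
        mul_le_mul_of_nonneg_right (hle _ ht') ((abs_nonneg _).trans (hbound x hx))
    _ = C * A * (t / 2) ^ (β - (m + k : ℕ)) := by
        rw [Nat.cast_add, add_comm (m : ℝ), ← sub_sub, Real.rpow_sub_natCast ht'.ne' (β - k)]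
        ring
    _ = C * (2 : ℝ)⁻¹ ^ (β - (m + k : ℕ)) * A * t ^ (β - (m + k : ℕ)) := by
        rw [div_eq_mul_inv, Real.mul_rpow ht.le (by positivity)]
        ring

theorem of_succ (hp : IsMarkovDensity μ p) (hf : Measurable f) (hM : ∀ᵐ y ∂μ, |f y| ≤ M) {l : ℕ}
    (hl : l ≠ 0) (hβl : β < l) (h : PoissonLipschitz μ p S f β (l + 1) A) :
    PoissonLipschitz μ p S f β l (A / (l - β)) := by
  intro t ht x hx
  rw [← neg_sub β]
  refine abs_le_of_abs_deriv_le_rpow (sub_neg.2 hβl)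
    (fun t ht => hp.hasDerivAt_poissonDeriv hf hM l x ht) (fun t ht => ?_)
    (hp.tendsto_poissonDeriv_atTop hM hl x) ht
  convert h t ht x hx using 3
  push_cast
  ring

theorem exists_of_add (hp : IsMarkovDensity μ p) {l : ℕ} (hl : l ≠ 0) (hβl : β < l) (j : ℕ) :
    ∃ C > 0, ∀ f : E → ℝ, Measurable f → (∃ M, ∀ᵐ y ∂μ, |f y| ≤ M) → ∀ A,
      PoissonLipschitz μ p S f β (l + j) A → PoissonLipschitz μ p S f β l (C * A) := by
  induction j with
  | zero => exact ⟨1, one_pos, fun f _ _ A hA => by rwa [one_mul]⟩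
  | succ j ih =>
    obtain ⟨C, hC, hle⟩ := ih
    have hβj : β < (l + j : ℕ) := hβl.trans_le (by exact_mod_cast l.le_add_right j)
    refine ⟨C / ((l + j : ℕ) - β), div_pos hC (sub_pos.2 hβj), fun f hf ⟨M, hM⟩ A hA => ?_⟩
    rw [div_mul_eq_mul_div, mul_div_assoc]
    exact hle f hf ⟨M, hM⟩ _ (of_succ hp hf hM (by lia) hβj hA)

theorem exists_of_lt (hp : IsMarkovDensity μ p) (hS : ∀ᵐ y ∂μ, y ∈ S) (k : ℕ) {l : ℕ}
    (hl : l ≠ 0) (hβl : β < l) :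
    ∃ C > 0, ∀ f : E → ℝ, Measurable f → (∃ M, ∀ᵐ y ∂μ, |f y| ≤ M) → ∀ A,
      PoissonLipschitz μ p S f β k A → PoissonLipschitz μ p S f β l (C * A) := by
  obtain ⟨C, hC, hup⟩ := exists_add hp hS β l k
  obtain ⟨D, hD, hdown⟩ := exists_of_add hp (S := S) hl hβl k
  refine ⟨D * C, mul_pos hD hC, fun f hf hM A hA => ?_⟩
  rw [mul_assoc]
  exact hdown f hf hM _ (hup f hf hM A hA)

end PoissonLipschitz

end MarkovDensity

section NoncentralGamma

open scoped Nat

/-- The density of the noncentral gamma law: the mixture, over a Poisson variable `m` of mean `r`,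
of the gamma laws of shape `m + b` and rate `c`. -/
noncomputable def noncentralGammaPDF (r b c y : ℝ) : ℝ :=
  ∑' m : ℕ, Real.exp (-r) * r ^ m / m ! * gammaPDFReal (m + b) c y

lemma noncentralGammaPDF_nonneg {r b c : ℝ} (hr : 0 ≤ r) (hb : 0 < b) (hc : 0 < c) (y : ℝ) :
    0 ≤ noncentralGammaPDF r b c y :=
  tsum_nonneg fun m =>
    mul_nonneg (by positivity) (gammaPDFReal_nonneg (by positivity : 0 < m + b) hc y)

lemma measurable_noncentralGammaPDF (b : ℝ) {X : Type*} [MeasurableSpace X] {r c y : X → ℝ}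
    (hr : Measurable r) (hc : Measurable c) (hy : Measurable y) :
    Measurable fun ω => noncentralGammaPDF (r ω) b (c ω) (y ω) := by
  have hgamma (b : ℝ) : Measurable fun ω => gammaPDFReal b (c ω) (y ω) :=
    Measurable.ite (measurableSet_le measurable_const hy) (by fun_prop) measurable_const
  unfold noncentralGammaPDF
  fun_prop

lemma integral_gammaPDFReal_mul_exp {b c l : ℝ} (hb : 0 < b) (hc : 0 < c) (hl : 0 ≤ l) :
    ∫ y in Ioi (0 : ℝ), gammaPDFReal b c y * Real.exp (-(l * y)) = (c / (c + l)) ^ b := by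
  have hcl : 0 < c + l := by positivity
  calc ∫ y in Ioi (0 : ℝ), gammaPDFReal b c y * Real.exp (-(l * y))
      = ∫ y in Ioi (0 : ℝ), c ^ b / Real.Gamma b * (y ^ (b - 1) * Real.exp (-((c + l) * y))) :=
        setIntegral_congr_fun measurableSet_Ioi fun y hy => by
          simp only [gammaPDFReal, if_pos (mem_Ioi.1 hy).le, add_mul, neg_add, Real.exp_add,
            mul_assoc]
    _ = (c / (c + l)) ^ b := by
        rw [integral_const_mul, Real.integral_rpow_mul_exp_neg_mul_Ioi hb hcl,
          Real.div_rpow one_pos.le hcl.le, Real.div_rpow hc.le hcl.le, Real.one_rpow]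
        field_simp [(Real.Gamma_pos_of_pos hb).ne']

lemma hasSum_poisson_mul_pow (r z : ℝ) :
    HasSum (fun m : ℕ => Real.exp (-r) * r ^ m / m ! * z ^ m) (Real.exp (-(r * (1 - z)))) := by
  convert! (NormedSpace.expSeries_div_hasSum_exp (r * z)).mul_left (Real.exp (-r)) using 1
  · funext m
    ring
  · rw [← Real.exp_eq_exp_ℝ, ← Real.exp_add]
    ring_nf

theorem integral_noncentralGammaPDF_mul_exp {r b c l : ℝ} (hr : 0 ≤ r) (hb : 0 < b) (hc : 0 < c)
    (hl : 0 ≤ l) :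
    ∫ y in Ioi (0 : ℝ), noncentralGammaPDF r b c y * Real.exp (-(l * y)) =
      (c / (c + l)) ^ b * Real.exp (-(r * (l / (c + l)))) := by
  have : 0 < c + l := by positivity
  let F (m : ℕ) (y : ℝ) : ℝ :=
    Real.exp (-r) * r ^ m / m ! * (gammaPDFReal (m + b) c y * Real.exp (-(l * y)))
  have hgamma (m : ℕ) :
      ∫ y in Ioi (0 : ℝ), gammaPDFReal (m + b) c y * Real.exp (-(l * y)) =
        (c / (c + l)) ^ m * (c / (c + l)) ^ b := by
    rw [integral_gammaPDFReal_mul_exp (by positivity) hc hl, Real.rpow_add (by positivity),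
      Real.rpow_natCast]
  have hF_nonneg (m : ℕ) (y : ℝ) : 0 ≤ F m y :=
    mul_nonneg (by positivity)
      (mul_nonneg (gammaPDFReal_nonneg (by positivity : 0 < m + b) hc y) (Real.exp_pos _).le)
  have hF_int (m : ℕ) : IntegrableOn (F m) (Ioi 0) :=
    (Integrable.of_integral_ne_zero (by rw [hgamma]; positivity)).const_mul _
  have hF_sum : HasSum (fun m => ∫ y in Ioi (0 : ℝ), F m y)
      ((c / (c + l)) ^ b * Real.exp (-(r * (l / (c + l))))) := by
    convert! (hasSum_poisson_mul_pow r (c / (c + l))).mul_left ((c / (c + l)) ^ b) using 1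
    · funext m
      rw [integral_const_mul, hgamma]
      ring
    · congr 4
      field_simp
      ring
  have hF_norm : Summable fun m => ∫ y in Ioi (0 : ℝ), ‖F m y‖ := by
    simpa only [Real.norm_of_nonneg (hF_nonneg _ _)] using hF_sum.summable
  rw [← (hasSum_integral_of_summable_integral_norm hF_int hF_norm).unique hF_sum]
  simp only [noncentralGammaPDF, ← tsum_mul_right, F, mul_assoc]

end NoncentralGamma

section LaguerreDensity

lemma one_sub_exp_neg_pos {s : ℝ} (hs : 0 < s) : 0 < 1 - Real.exp (-s) := by
  simpa using hs

/-- The transition density of the one-dimensional Laguerre semigroup of type `a`, a noncentral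
gamma density. The value at `x < 0` is that at `x = 0`, which makes it a probability density in `y`
for every real `x`. -/
noncomputable def laguerreDensity (a s x y : ℝ) : ℝ :=
  noncentralGammaPDF (Real.exp (-s) * (1 - Real.exp (-s))⁻¹ * max x 0) (a + 1)
    (1 - Real.exp (-s))⁻¹ y

variable {a s : ℝ}

lemma laguerreDensity_nonneg (ha : -1 < a) (hs : 0 < s) (x y : ℝ) : 0 ≤ laguerreDensity a s x y :=
  have := one_sub_exp_neg_pos hs
  noncentralGammaPDF_nonneg (by positivity) (by linarith) (by positivity) y

lemma measurable_laguerreDensity (a : ℝ) {X : Type*} [MeasurableSpace X] {s x y : X → ℝ}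
    (hs : Measurable s) (hx : Measurable x) (hy : Measurable y) :
    Measurable fun ω => laguerreDensity a (s ω) (x ω) (y ω) :=
  measurable_noncentralGammaPDF _ (by fun_prop) (by fun_prop) (by fun_prop)

theorem integral_laguerreDensity_mul_exp (ha : -1 < a) (hs : 0 < s) (x : ℝ) {l : ℝ} (hl : 0 ≤ l) :
    ∫ y in Ioi (0 : ℝ), laguerreDensity a s x y * Real.exp (-(l * y)) =
      (1 + l * (1 - Real.exp (-s)))⁻¹ ^ (a + 1) *
        Real.exp (-(Real.exp (-s) * l / (1 + l * (1 - Real.exp (-s))) * max x 0)) := by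
  have hq := one_sub_exp_neg_pos hs
  simp only [laguerreDensity]
  rw [integral_noncentralGammaPDF_mul_exp (by positivity) (by linarith) (by positivity) hl]
  congr 3
  · field_simp
  · field_simp

lemma integral_laguerreDensity (ha : -1 < a) (hs : 0 < s) (x : ℝ) :
    ∫ y in Ioi (0 : ℝ), laguerreDensity a s x y = 1 := by
  simpa using integral_laguerreDensity_mul_exp ha hs x le_rfl

lemma integrableOn_laguerreDensity (ha : -1 < a) (hs : 0 < s) (x : ℝ) :
    IntegrableOn (laguerreDensity a s x) (Ioi 0) :=
  Integrable.of_integral_ne_zero (by simp [integral_laguerreDensity ha hs x])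

lemma integral_laguerreDensity_mul_integral_mul_exp (ha : -1 < a) (hs : 0 < s) {u : ℝ} (hu : 0 < u)
    (x : ℝ) {l : ℝ} (hl : 0 ≤ l) :
    ∫ y in Ioi (0 : ℝ), laguerreDensity a s x y *
        ∫ z in Ioi (0 : ℝ), laguerreDensity a u y z * Real.exp (-(l * z)) =
      ∫ z in Ioi (0 : ℝ), laguerreDensity a (s + u) x z * Real.exp (-(l * z)) := by
  have hq := one_sub_exp_neg_pos hs
  have hr := one_sub_exp_neg_pos hu
  set D := 1 + l * (1 - Real.exp (-u)) with hD
  have hD_pos : 0 < D := by positivity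
  have hmul : D * (1 + Real.exp (-u) * l / D * (1 - Real.exp (-s))) =
      1 + l * (1 - Real.exp (-(s + u))) := by
    rw [mul_add, ← mul_assoc, mul_div_cancel₀ _ hD_pos.ne', hD, neg_add, Real.exp_add]
    ring
  calc ∫ y in Ioi (0 : ℝ), laguerreDensity a s x y *
        ∫ z in Ioi (0 : ℝ), laguerreDensity a u y z * Real.exp (-(l * z))
      = ∫ y in Ioi (0 : ℝ), D⁻¹ ^ (a + 1) *
          (laguerreDensity a s x y * Real.exp (-(Real.exp (-u) * l / D * y))) :=
        setIntegral_congr_fun measurableSet_Ioi fun y hy => by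
          simp only [integral_laguerreDensity_mul_exp ha hu y hl, max_eq_left (mem_Ioi.1 hy).le,
            ← hD]
          ring
    _ = ∫ z in Ioi (0 : ℝ), laguerreDensity a (s + u) x z * Real.exp (-(l * z)) := by
        rw [integral_const_mul, integral_laguerreDensity_mul_exp ha hs x (by positivity),
          integral_laguerreDensity_mul_exp ha (add_pos hs hu) x hl, ← mul_assoc,
          ← Real.mul_rpow (by positivity) (by positivity), ← mul_inv, hmul, neg_add, Real.exp_add,
          mul_div_assoc', div_div, hmul, mul_assoc, neg_add, Real.exp_add]

theorem isMarkovDensity_laguerreDensity (ha : -1 < a) :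
    IsMarkovDensity (volume.restrict (Ioi 0)) (laguerreDensity a) where
  measurable := measurable_laguerreDensity a (by fun_prop) (by fun_prop) (by fun_prop)
  nonneg s hs x y := laguerreDensity_nonneg ha hs x y
  integral_eq_one s hs x := integral_laguerreDensity ha hs x
  integral_mul_ae_eq s hs u hu x := by
    have hkernel : Measurable (Function.uncurry (laguerreDensity a u)) :=
      measurable_laguerreDensity a measurable_const measurable_fst measurable_snd
    have hprod := integrable_mul_of_integral_eq_one (integrableOn_laguerreDensity ha hs x) hkernel
      (.of_forall (laguerreDensity_nonneg ha hu)) (.of_forall (integral_laguerreDensity ha hu))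
    refine ae_eq_of_forall_integral_mul_exp_neg_nat_mul_eq hprod.integral_prod_right
      (integrableOn_laguerreDensity ha (add_pos hs hu) x)
      (.of_forall fun z => integral_nonneg fun y =>
        mul_nonneg (laguerreDensity_nonneg ha hs x y) (laguerreDensity_nonneg ha hu y z))
      (.of_forall (laguerreDensity_nonneg ha (add_pos hs hu) x)) fun n => ?_
    have hexp_le : ∀ᵐ z ∂volume.restrict (Ioi (0 : ℝ)), |Real.exp (-(n * z))| ≤ 1 := by
      filter_upwards [ae_restrict_mem measurableSet_Ioi] with z hz
      rw [Real.abs_exp, Real.exp_le_one_iff, neg_nonpos]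
      exact mul_nonneg n.cast_nonneg (le_of_lt hz)
    rw [← integral_mul_integral_kernel_mul (integrableOn_laguerreDensity ha hs x) hkernel
      (.of_forall (laguerreDensity_nonneg ha hu)) (.of_forall (integral_laguerreDensity ha hu))
      (by fun_prop) hexp_le]
    exact integral_laguerreDensity_mul_integral_mul_exp ha hs hu x n.cast_nonneg

end LaguerreDensity

section LaguerrePoissonKernel

lemma div_rpow_mul_sqrt_mul_rpow {ρ w : ℝ} (hρ : 0 < ρ) (hw : 0 < w) (a : ℝ) (m : ℕ) :
    (w / ρ) ^ (a / 2) * √(ρ * w) ^ (2 * (m : ℝ) + a) = ρ ^ m * w ^ ((m : ℝ) + a) := by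
  have hsqrt : √(ρ * w) ^ (2 * (m : ℝ) + a) = (ρ * w) ^ m * (ρ * w) ^ (a / 2) := by
    rw [Real.sqrt_eq_rpow, ← Real.rpow_mul (by positivity), ← Real.rpow_natCast,
      ← Real.rpow_add (by positivity)]
    ring_nf
  have hprod : (w / ρ) ^ (a / 2) * (ρ * w) ^ (a / 2) = w ^ a := by
    rw [← Real.mul_rpow (by positivity) (by positivity), show w / ρ * (ρ * w) = w ^ 2 by field_simp,
      ← Real.rpow_natCast, ← Real.rpow_mul hw.le]
    congr 1
    push_cast
    ring
  rw [hsqrt, Real.rpow_add hw, Real.rpow_natCast, ← hprod, mul_pow]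
  ring

theorem noncentralGammaPDF_eq_besselI {ρ c y : ℝ} (hρ : 0 < ρ) (hc : 0 < c) (hy : 0 < y) (a : ℝ) :
    noncentralGammaPDF ρ (a + 1) c y =
      c * Real.exp (-(ρ + c * y)) * (c * y / ρ) ^ (a / 2) * besselI a (2 * √(ρ * (c * y))) := by
  rw [besselI, ← tsum_mul_left, noncentralGammaPDF]
  refine tsum_congr fun m => ?_
  have hpow := div_rpow_mul_sqrt_mul_rpow hρ (mul_pos hc hy) a m
  rw [gammaPDFReal, if_pos hy.le, mul_div_cancel_left₀ _ two_ne_zero, ← add_assoc,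
    add_sub_cancel_right, Real.rpow_add_one hc.ne', neg_add, Real.exp_add]
  rw [Real.mul_rpow hc.le hy.le] at hpow
  linear_combination (-(c * Real.exp (-ρ) * Real.exp (-(c * y))) /
    (m.factorial * Real.Gamma (m + a + 1))) * hpow

lemma laguerreDensity_eq_besselI {s x y : ℝ} (hs : 0 < s) (hx : 0 < x) (hy : 0 < y) (a : ℝ) :
    laguerreDensity a s x y = (1 - Real.exp (-s))⁻¹ * ((y / x) ^ (a / 2) *
      Real.exp (-((Real.exp (-s) * x + y) / (1 - Real.exp (-s))) - a * -s / 2) *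
      besselI a (2 * √(Real.exp (-s) * x * y) / (1 - Real.exp (-s)))) := by
  have hq := one_sub_exp_neg_pos hs
  rw [laguerreDensity, max_eq_left hx.le,
    noncentralGammaPDF_eq_besselI (by positivity) (by positivity) hy]
  set q := 1 - Real.exp (-s)
  have hexponent : Real.exp (-(Real.exp (-s) * q⁻¹ * x + q⁻¹ * y)) =
      Real.exp (-((Real.exp (-s) * x + y) / q)) := by
    congr 2
    field_simp
  have hratio : (q⁻¹ * y / (Real.exp (-s) * q⁻¹ * x)) ^ (a / 2) =
      Real.exp (-(a * -s / 2)) * (y / x) ^ (a / 2) := by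
    rw [show q⁻¹ * y / (Real.exp (-s) * q⁻¹ * x) = Real.exp s * (y / x) by
        rw [Real.exp_neg]; field_simp,
      Real.mul_rpow (Real.exp_pos _).le (by positivity), ← Real.exp_mul]
    ring_nf
  have hsqrt : 2 * √(Real.exp (-s) * q⁻¹ * x * (q⁻¹ * y)) = 2 * √(Real.exp (-s) * x * y) / q := by
    rw [show Real.exp (-s) * q⁻¹ * x * (q⁻¹ * y) = Real.exp (-s) * x * y / q ^ 2 by field_simp,
      Real.sqrt_div (by positivity), Real.sqrt_sq hq.le, mul_div_assoc]
  rw [hexponent, hratio, hsqrt, sub_eq_add_neg, Real.exp_add]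
  ring

lemma setIntegral_Ioo_eq_setIntegral_exp_neg (h : ℝ → ℝ) :
    ∫ r in Ioo (0 : ℝ) 1, h r = ∫ s in Ioi (0 : ℝ), Real.exp (-s) * h (Real.exp (-s)) := by
  have himage : (fun s : ℝ => Real.exp (-s)) '' Ioi 0 = Ioo 0 1 := by
    ext r
    constructor
    · rintro ⟨s, hs, rfl⟩
      exact ⟨Real.exp_pos _, by simpa using hs⟩
    · rintro ⟨h0, h1⟩
      exact ⟨-Real.log r, by simpa using Real.log_neg h0 h1, by simp [Real.exp_log h0]⟩
  have hderiv : ∀ s ∈ Ioi (0 : ℝ),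
      HasDerivWithinAt (fun s : ℝ => Real.exp (-s)) (-Real.exp (-s)) (Ioi 0) s := fun s _ => by
    simpa using ((hasDerivAt_neg s).exp).hasDerivWithinAt
  have hinj : InjOn (fun s : ℝ => Real.exp (-s)) (Ioi 0) := fun s _ u _ hsu => by
    simpa using hsu
  rw [← himage, integral_image_eq_integral_abs_deriv_smul measurableSet_Ioi hderiv hinj]
  simp only [abs_neg, Real.abs_exp, smul_eq_mul]

variable {d : ℕ}

/-- The transition density of the `d`-dimensional Laguerre semigroup of type `α`. -/
noncomputable def laguerreProdDensity (α : Fin d → ℝ) (s : ℝ) (x y : Fin d → ℝ) : ℝ :=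
  ∏ j, laguerreDensity (α j) s (x j) (y j)

lemma measurableSet_posOrthant : MeasurableSet (posOrthant d) :=
  MeasurableSet.univ_pi fun _ => measurableSet_Ioi

lemma restrict_posOrthant : (volume : Measure (Fin d → ℝ)).restrict (posOrthant d) =
    Measure.pi fun _ => volume.restrict (Ioi (0 : ℝ)) := by
  rw [posOrthant, volume_pi, Measure.restrict_pi_pi]

variable {α : Fin d → ℝ}

theorem isMarkovDensity_laguerreProdDensity (hα : ∀ j, -1 < α j) :
    IsMarkovDensity (volume.restrict (posOrthant d)) (laguerreProdDensity α) := by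
  rw [restrict_posOrthant]
  exact IsMarkovDensity.pi fun j => isMarkovDensity_laguerreDensity (hα j)

theorem plKernel_eq_integral (α : Fin d → ℝ) (t : ℝ) {x y : Fin d → ℝ} (hx : x ∈ posOrthant d)
    (hy : y ∈ posOrthant d) :
    plKernel d α t x y = ∫ s in Ioi (0 : ℝ), stableDensity t s * laguerreProdDensity α s x y := by
  rw [plKernel, setIntegral_Ioo_eq_setIntegral_exp_neg, ← integral_const_mul]
  refine setIntegral_congr_fun measurableSet_Ioi fun s (hs : 0 < s) => ?_
  have hprod : laguerreProdDensity α s x y = ((1 - Real.exp (-s)) ^ d)⁻¹ *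
      ∏ j, (y j / x j) ^ (α j / 2) *
        Real.exp (-((Real.exp (-s) * x j + y j) / (1 - Real.exp (-s))) - α j * -s / 2) *
        besselI (α j) (2 * √(Real.exp (-s) * x j * y j) / (1 - Real.exp (-s))) := by
    rw [laguerreProdDensity, ← inv_pow, ← Fin.prod_const, ← Finset.prod_mul_distrib]
    exact Finset.prod_congr rfl fun j _ =>
      laguerreDensity_eq_besselI hs (hx j (mem_univ j)) (hy j (mem_univ j)) (α j)
  have hq := one_sub_exp_neg_pos hs
  simp only [Real.log_exp, neg_neg, mul_neg, div_neg] at hprod ⊢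
  rw [hprod, stableDensity, Real.rpow_neg hs.le]
  have := Real.exp_pos (-s)
  field_simp

variable {f : (Fin d → ℝ) → ℝ} {M t : ℝ} {x : Fin d → ℝ}

theorem plP_eq_poissonDeriv_zero (hα : ∀ j, -1 < α j) (hf : Measurable f)
    (hM : ∀ y ∈ posOrthant d, |f y| ≤ M) (ht : 0 < t) (hx : x ∈ posOrthant d) :
    plP d α t f x =
      poissonDeriv (volume.restrict (posOrthant d)) (laguerreProdDensity α) 0 t f x := by
  rw [(isMarkovDensity_laguerreProdDensity hα).poissonDeriv_eq_integral hf
    (ae_restrict_of_forall_mem measurableSet_posOrthant hM) 0 ht, plP, if_neg ht.ne']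
  refine setIntegral_congr_fun measurableSet_posOrthant fun y hy => ?_
  simp only [plKernel_eq_integral α t hx hy, stableDeriv_zero]

theorem iteratedDeriv_plP (hα : ∀ j, -1 < α j) (hf : Measurable f)
    (hM : ∀ y ∈ posOrthant d, |f y| ≤ M) (n : ℕ) (ht : 0 < t) (hx : x ∈ posOrthant d) :
    iteratedDeriv n (fun u => plP d α u f x) t =
      poissonDeriv (volume.restrict (posOrthant d)) (laguerreProdDensity α) n t f x := by
  have heq : (fun u => plP d α u f x) =ᶠ[𝓝 t] fun u =>
      poissonDeriv (volume.restrict (posOrthant d)) (laguerreProdDensity α) 0 u f x :=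
    (eventually_gt_nhds ht).mono fun u hu => plP_eq_poissonDeriv_zero hα hf hM hu hx
  rw [heq.iteratedDeriv_eq]
  exact (isMarkovDensity_laguerreProdDensity hα).iteratedDeriv_poissonDeriv_zero hf
    (ae_restrict_of_forall_mem measurableSet_posOrthant hM) n x ht

end LaguerrePoissonKernel

theorem exists_lipschitz_const_of_ne_zero {d : ℕ} {α : Fin d → ℝ} (hα : ∀ j, -1 < α j) {β : ℝ}
    (k : ℕ) {l : ℕ} (hl : l ≠ 0) (hβl : β < l) :
    ∃ C > 0, ∀ f : (Fin d → ℝ) → ℝ, Measurable f → (∃ M, ∀ y ∈ posOrthant d, |f y| ≤ M) → ∀ A,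
      (∀ t > (0 : ℝ), ∀ x ∈ posOrthant d,
        |iteratedDeriv k (fun u => plP d α u f x) t| ≤ A * t ^ (β - (k : ℝ))) →
      ∀ t > (0 : ℝ), ∀ x ∈ posOrthant d,
        |iteratedDeriv l (fun u => plP d α u f x) t| ≤ C * A * t ^ (β - (l : ℝ)) := by
  obtain ⟨C, hC, h⟩ := PoissonLipschitz.exists_of_lt (isMarkovDensity_laguerreProdDensity hα)
    (ae_restrict_mem measurableSet_posOrthant) k hl hβl
  refine ⟨C, hC, fun f hf ⟨M, hM⟩ A hA t ht x hx => ?_⟩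
  rw [iteratedDeriv_plP hα hf hM l ht hx]
  refine h f hf ⟨M, ae_restrict_of_forall_mem measurableSet_posOrthant hM⟩ A ?_ t ht x hx
  intro u hu z hz
  rw [← iteratedDeriv_plP hα hf hM k hu hz]
  exact hA u hu z hz

theorem laguerre_lipschitz_condition_independent_of_order_general
    {d : ℕ} {α : Fin d → ℝ} (hα : ∀ j, -1 < α j) {β : ℝ} {k l : ℕ} (hk : k ≠ 0)
    (hβk : β < k) (hl : l ≠ 0) (hβl : β < l) :
    (∀ f : (Fin d → ℝ) → ℝ, Measurable f → (∃ M, ∀ y ∈ posOrthant d, |f y| ≤ M) →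
      ((∃ A ≥ (0 : ℝ), ∀ t > (0 : ℝ), ∀ x ∈ posOrthant d,
          |iteratedDeriv k (fun u => plP d α u f x) t| ≤ A * t ^ (β - (k : ℝ))) ↔
       (∃ A' ≥ (0 : ℝ), ∀ t > (0 : ℝ), ∀ x ∈ posOrthant d,
          |iteratedDeriv l (fun u => plP d α u f x) t| ≤ A' * t ^ (β - (l : ℝ))))) ∧
    ∃ C > 0, ∀ f : (Fin d → ℝ) → ℝ, Measurable f → (∃ M, ∀ y ∈ posOrthant d, |f y| ≤ M) → ∀ A,
      (∀ t > (0 : ℝ), ∀ x ∈ posOrthant d,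
        |iteratedDeriv k (fun u => plP d α u f x) t| ≤ A * t ^ (β - (k : ℝ))) →
      ∀ t > (0 : ℝ), ∀ x ∈ posOrthant d,
        |iteratedDeriv l (fun u => plP d α u f x) t| ≤ C * A * t ^ (β - (l : ℝ)) := by
  obtain ⟨C, hC, hkl⟩ := exists_lipschitz_const_of_ne_zero hα k hl hβl
  obtain ⟨D, hD, hlk⟩ := exists_lipschitz_const_of_ne_zero hα l hk hβk
  exact ⟨fun f hf hM =>
    ⟨fun ⟨A, hA, h⟩ => ⟨C * A, by positivity, hkl f hf hM A h⟩,
      fun ⟨A, hA, h⟩ => ⟨D * A, by positivity, hlk f hf hM A h⟩⟩, C, hC, hkl⟩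

theorem laguerre_lipschitz_condition_independent_of_order
    (d : ℕ) (hd : 1 ≤ d) (α : Fin d → ℝ) (hα : ∀ j, -(1 / 2 : ℝ) < α j)
    (β : ℝ) (hβ : 0 < β) (k l : ℕ) (hk : β < k) (hl : β < l) :
    (∀ f : (Fin d → ℝ) → ℝ, Measurable f → (∃ M, ∀ y, |f y| ≤ M) →
      ((∃ A ≥ (0 : ℝ), ∀ t > (0 : ℝ), ∀ x ∈ posOrthant d,
          |iteratedDeriv k (fun u => plP d α u f x) t| ≤ A * t ^ (β - (k : ℝ))) ↔
       (∃ A' ≥ (0 : ℝ), ∀ t > (0 : ℝ), ∀ x ∈ posOrthant d,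
          |iteratedDeriv l (fun u => plP d α u f x) t| ≤ A' * t ^ (β - (l : ℝ))))) ∧
    ∃ C > 0, ∀ f : (Fin d → ℝ) → ℝ, Measurable f → (∃ M, ∀ y, |f y| ≤ M) →
      ∀ A ≥ (0 : ℝ),
        (∀ t > (0 : ℝ), ∀ x ∈ posOrthant d,
          |iteratedDeriv k (fun u => plP d α u f x) t| ≤ A * t ^ (β - (k : ℝ))) →
        ∀ t > (0 : ℝ), ∀ x ∈ posOrthant d,
          |iteratedDeriv l (fun u => plP d α u f x) t| ≤ C * A * t ^ (β - (l : ℝ)) := by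
  have ne_zero {n : ℕ} (hn : β < n) : n ≠ 0 := Nat.cast_ne_zero.1 (hβ.trans hn).ne'
  obtain ⟨hiff, C, hC, h⟩ := laguerre_lipschitz_condition_independent_of_order_general
    (α := α) (fun j => by linarith [hα j]) (ne_zero hk) hk (ne_zero hl) hl
  exact ⟨fun f hf ⟨M, hM⟩ => hiff f hf ⟨M, fun y _ => hM y⟩,
    C, hC, fun f hf ⟨M, hM⟩ A _ => h f hf ⟨M, fun y _ => hM y⟩ A⟩
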